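/- arXiv:2408.04904 — 4 statements merged into one kernel-verified Lean document; each statement's English description precedes it below -/
import Mathlib

section
/- Let K be an infinite field, let N ≥ 1, and let (A_i)_{i ∈ ι} and (Ǎ_i)_{i ∈ ι} be two families of N×N matrices with entries in K. Suppose Δ is an N×N matrix with entries in K(ε) which is invertible over K(ε) and satisfies A_i · Δ = − Δ · Ǎ_iᵀ for all i ∈ ι (where A_i and Ǎ_i are viewed as matrices over K(ε)). Then there exist an invertible N×N matrix Δ₀ with entries in K and an invertible N×N matrix Δ̃ with entries in K(ε) such that Δ = Δ₀ · Δ̃ (with Δ₀ viewed over K(ε)) and Δ̃ commutes with Ǎ_iᵀ for every i ∈ ι. -/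
/-!
Multiplying `Δ` by a common denominator of its entries gives a polynomial matrix `P` with
nonzero determinant (`exists_polynomial_matrix`) that still satisfies `A i · P = −P · (B i)ᵀ`.
As `K` is infinite, `det P` does not vanish at some `r : K`, so `Δ₀ := P(r)` is an invertible
constant solution of the same equations. Two solutions differ by a factor in the commutant of
the `(B i)ᵀ`, so `Δ' := Δ₀⁻¹ · Δ` works (`commute_of_intertwine`).
-/

open Matrix

open Polynomial in
/-- Clearing denominators in an invertible matrix over `K(ε)`. -/
lemma exists_polynomial_matrix {K : Type*} [Field K] {N : ℕ}
    (Δ : Matrix (Fin N) (Fin N) (RatFunc K)) (hΔ : IsUnit Δ) :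
    ∃ (d : RatFunc K) (P : Matrix (Fin N) (Fin N) K[X]),
      P.map (algebraMap K[X] (RatFunc K)) = d • Δ ∧ P.det ≠ 0 := by
  obtain ⟨b, hb⟩ := IsLocalization.exist_integer_multiples_of_finite (nonZeroDivisors K[X])
    (fun p : Fin N × Fin N => Δ p.1 p.2)
  choose P hP using hb
  have hmap : (Matrix.of fun i j => P (i, j)).map (algebraMap K[X] (RatFunc K)) =
      algebraMap K[X] (RatFunc K) b • Δ := by
    ext i j
    simp [hP (i, j), Algebra.smul_def]
  refine ⟨algebraMap K[X] (RatFunc K) b, Matrix.of fun i j => P (i, j), hmap, fun h0 => ?_⟩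
  have h1 := congrArg Matrix.det hmap
  rw [← RingHom.mapMatrix_apply, ← RingHom.map_det, h0, map_zero, Matrix.det_smul] at h1
  have hb0 : algebraMap K[X] (RatFunc K) b ≠ 0 :=
    IsLocalization.to_map_ne_zero_of_mem_nonZeroDivisors _ le_rfl b.2
  exact mul_ne_zero (pow_ne_zero _ hb0) ((Matrix.isUnit_iff_isUnit_det _).1 hΔ).ne_zero h1.symm

/-- Two solutions `u`, `x` of `a * y = -(y * c)`, the first one invertible, differ by the factor
`u⁻¹ * x`, which commutes with `c`. -/
lemma commute_of_intertwine {R : Type*} [Ring R] (u : Rˣ) {x a c : R}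
    (hu : a * u = -(u * c)) (hx : a * x = -(x * c)) :
    (↑u⁻¹ * x) * c = c * (↑u⁻¹ * x) := by
  have hc : c * ↑u⁻¹ = -(↑u⁻¹ * a) := by
    rw [← Units.inv_mul_cancel_left u (c * ↑u⁻¹), ← mul_assoc (u : R), ← neg_eq_iff_eq_neg.2 hu]
    simp [mul_assoc]
  rw [← mul_assoc c, hc, neg_mul, mul_assoc, mul_assoc, hx, mul_neg, neg_neg]

/-- Let `K` be an infinite field, `N ≥ 1`, and let `(A i)` and `(B i)`
(`B` playing the role of `Ǎ`) be families of `N × N` matrices over `K`. If `Δ` is an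
invertible `N × N` matrix over the rational function field `K(ε)` satisfying
`A i · Δ = − Δ · (B i)ᵀ` for all `i` (matrices over `K` viewed over `K(ε)` via the
canonical embedding), then `Δ = Δ₀ · Δ'` where `Δ₀` is a constant invertible matrix over
`K` and `Δ'` is an invertible matrix over `K(ε)` commuting with every `(B i)ᵀ`. -/
theorem intersection_matrix_factorisation
    {K : Type*} [Field K] [Infinite K] {N : ℕ} (hN : 1 ≤ N) {ι : Type*}
    (A B : ι → Matrix (Fin N) (Fin N) K)
    (Δ : Matrix (Fin N) (Fin N) (RatFunc K)) (hΔ : IsUnit Δ)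
    (h : ∀ i, (A i).map (algebraMap K (RatFunc K)) * Δ =
      -(Δ * ((B i).map (algebraMap K (RatFunc K)))ᵀ)) :
    ∃ (Δ₀ : Matrix (Fin N) (Fin N) K) (Δ' : Matrix (Fin N) (Fin N) (RatFunc K)),
      IsUnit Δ₀ ∧ IsUnit Δ' ∧
      Δ = Δ₀.map (algebraMap K (RatFunc K)) * Δ' ∧
      ∀ i, Δ' * ((B i).map (algebraMap K (RatFunc K)))ᵀ =
        ((B i).map (algebraMap K (RatFunc K)))ᵀ * Δ' := by
  classical
  obtain ⟨d, P, hP, hdet⟩ := exists_polynomial_matrix Δ hΔ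
  obtain ⟨r, hr⟩ : ∃ r : K, P.det.eval r ≠ 0 := by
    by_contra! hz
    exact hdet (Polynomial.funext fun r => by simpa using hz r)
  -- Entrywise: evaluation `K[ε] → K` at `r`, then `K[ε] → K(ε)`, `K → K[ε]` and `K → K(ε)`.
  set ev := (Polynomial.evalRingHom r).mapMatrix (m := Fin N)
  set lift := (algebraMap (Polynomial K) (RatFunc K)).mapMatrix (m := Fin N)
  set const := (Polynomial.C : K →+* _).mapMatrix (m := Fin N)
  set incl := (algebraMap K (RatFunc K)).mapMatrix (m := Fin N)
  have lift_const (M : Matrix (Fin N) (Fin N) K) : lift (const M) = incl M := by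
    ext i j
    simp [lift, const, incl]
  have ev_const (M : Matrix (Fin N) (Fin N) K) : ev (const M) = M := by
    ext i j
    simp [ev, const]
  have h' (i : ι) : incl (A i) * Δ = -(Δ * incl (B i)ᵀ) := h i
  have hpoly (i : ι) : const (A i) * P = -(P * const (B i)ᵀ) := by
    have hinj : Function.Injective lift :=
      Matrix.map_injective (RatFunc.algebraMap_injective K)
    apply hinj
    have hP' : lift P = d • Δ := hP
    rw [map_neg, map_mul, map_mul, lift_const, lift_const, hP', Matrix.mul_smul, h' i,
      Matrix.smul_mul, smul_neg]
  have hev (i : ι) : A i * ev P = -(ev P * (B i)ᵀ) := by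
    simpa only [map_neg, map_mul, ev_const] using congrArg ev (hpoly i)
  have hunit : IsUnit (ev P) := by
    rw [Matrix.isUnit_iff_isUnit_det, isUnit_iff_ne_zero, ← RingHom.map_det]
    exact hr
  obtain ⟨u, hu⟩ := hunit.map incl
  refine ⟨ev P, (u⁻¹ : (Matrix (Fin N) (Fin N) (RatFunc K))ˣ).val * Δ, hunit,
    u⁻¹.isUnit.mul hΔ, ?_, fun i => ?_⟩
  · change Δ = incl (ev P) * _
    rw [← hu, Units.mul_inv_cancel_left]
  · refine commute_of_intertwine u (a := incl (A i)) (c := incl (B i)ᵀ) ?_ (h' i)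
    rw [hu, ← map_mul, ← map_mul, ← map_neg, hev i]
end

section
/- Let K be an infinite field, let N ≥ 1, and let (A_i)_{i ∈ ι} and (Ǎ_i)_{i ∈ ι} be two families of N×N matrices with entries in K. Suppose Δ is an N×N matrix with entries in K(ε) which is invertible over K(ε) and satisfies A_i · Δ = − Δ · Ǎ_iᵀ for all i ∈ ι (where A_i and Ǎ_i are viewed as matrices over K(ε)). Then there exists an invertible N×N matrix Δ₀ with entries in K such that A_i = − Δ₀ · Ǎ_iᵀ · Δ₀⁻¹ for all i ∈ ι. -/
/-!
The intertwining relation is linear in `Δ`, so it survives multiplying `Δ` by a common denominator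
of its entries (`exists_polynomial_matrix_eq_smul`). This gives a polynomial intertwiner `P` with
`det P ≠ 0`. As `K` is infinite, some `e : K` is not a root of `det P`; evaluating `P` at `e`
preserves the relation, since the matrices `A i` and `B i` are constant, and gives an invertible
matrix over `K`.
-/

open Matrix

/-- Clearing denominators in a matrix of rational functions. -/
theorem exists_polynomial_matrix_eq_smul {K : Type*} [Field K] {m n : Type*} [Finite m] [Finite n]
    (M : Matrix m n (RatFunc K)) :
    ∃ d : RatFunc K, d ≠ 0 ∧ ∃ P : Matrix m n (Polynomial K),
      P.map (algebraMap (Polynomial K) (RatFunc K)) = d • M := by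
  obtain ⟨b, hb⟩ := IsLocalization.exist_integer_multiples_of_finite
    (nonZeroDivisors (Polynomial K)) (fun p : m × n => M p.1 p.2)
  choose P hP using hb
  refine ⟨algebraMap _ _ (b : Polynomial K),
    IsFractionRing.to_map_ne_zero_of_mem_nonZeroDivisors b.2, Matrix.of fun i j => P (i, j), ?_⟩
  ext i j
  simpa [Algebra.smul_def] using hP (i, j)

theorem map_neg_ringHom {R S m n : Type*} [Ring R] [Ring S] (f : R →+* S) (M : Matrix m n R) :
    (-M).map f = -(M.map f) := by
  ext a b
  simp



/-- Let `K` be an infinite field, `N ≥ 1`, and let `(A i)` and `(B i)`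
(`B` playing the role of `Ǎ`) be families of `N × N` matrices over `K`. If `Δ` is an
invertible `N × N` matrix over the rational function field `K(ε)` satisfying
`A i · Δ = − Δ · (B i)ᵀ` for all `i` (matrices over `K` viewed over `K(ε)` via the
canonical embedding), then there is a constant invertible matrix `Δ₀` over `K` with
`A i = − Δ₀ · (B i)ᵀ · Δ₀⁻¹` for all `i`. -/
theorem constant_intertwiner_from_rational_intertwiner
    {K : Type*} [Field K] [Infinite K] {N : ℕ} (hN : 1 ≤ N) {ι : Type*}
    (A B : ι → Matrix (Fin N) (Fin N) K)
    (Δ : Matrix (Fin N) (Fin N) (RatFunc K)) (hΔ : IsUnit Δ)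
    (h : ∀ i, (A i).map (algebraMap K (RatFunc K)) * Δ =
      -(Δ * ((B i).map (algebraMap K (RatFunc K)))ᵀ)) :
    ∃ Δ₀ : Matrix (Fin N) (Fin N) K,
      IsUnit Δ₀ ∧ ∀ i, A i = -(Δ₀ * (B i)ᵀ * Δ₀⁻¹) := by
  classical
  obtain ⟨d, hd, P, hP⟩ := exists_polynomial_matrix_eq_smul Δ
  have hinj : Function.Injective (algebraMap (Polynomial K) (RatFunc K)) :=
    IsFractionRing.injective _ _
  have hdet : P.det ≠ 0 := by
    intro h0
    have h1 : (P.map (algebraMap (Polynomial K) (RatFunc K))).det = 0 := by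
      rw [← RingHom.mapMatrix_apply, ← RingHom.map_det, h0, map_zero]
    rw [hP, Matrix.det_smul] at h1
    have hu : Δ.det ≠ 0 := ((Matrix.isUnit_iff_isUnit_det _).mp hΔ).ne_zero
    exact mul_ne_zero (pow_ne_zero _ hd) hu h1
  have hmap : ∀ M : Matrix (Fin N) (Fin N) K,
      (M.map Polynomial.C).map (algebraMap (Polynomial K) (RatFunc K)) =
        M.map (algebraMap K (RatFunc K)) := by
    intro M
    ext a b
    simp
  have hpoly : ∀ i, (A i).map Polynomial.C * P = -(P * ((B i).map Polynomial.C)ᵀ) := by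
    intro i
    apply Matrix.map_injective hinj
    simp only [map_neg_ringHom, Matrix.map_mul, ← Matrix.transpose_map, hmap, hP]
    rw [Matrix.mul_smul, h i, Matrix.smul_mul, smul_neg, Matrix.transpose_map]
  -- A nonzero polynomial over an infinite field has a non-root.
  obtain ⟨e, he⟩ : ∃ e : K, P.det.eval e ≠ 0 := by
    by_contra! hall
    exact hdet (Polynomial.funext fun r => by simpa using hall r)
  have hmapEval : ∀ M : Matrix (Fin N) (Fin N) K,
      (M.map Polynomial.C).map (Polynomial.evalRingHom e) = M := by
    intro M
    ext a b
    simp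
  have hunit : IsUnit (P.map (Polynomial.evalRingHom e)).det := by
    rw [← RingHom.mapMatrix_apply, ← RingHom.map_det]
    exact he.isUnit
  refine ⟨P.map (Polynomial.evalRingHom e), (Matrix.isUnit_iff_isUnit_det _).mpr hunit,
    fun i => ?_⟩
  have h2 := congrArg (fun M => M.map (Polynomial.evalRingHom e)) (hpoly i)
  simp only [map_neg_ringHom, Matrix.map_mul, ← Matrix.transpose_map,
    hmapEval] at h2
  rw [← Matrix.neg_mul, ← h2, Matrix.mul_nonsing_inv_cancel_right _ _ hunit]
end

section
/- Let F be an algebraically closed field, let N ≥ 1, and let (A_i)_{i ∈ ι} be an irreducible family of N×N matrices over F. Suppose Δ is an N×N matrix with entries in F(ε) which is invertible over F(ε) and satisfies A_i · Δ = Δ · A_iᵀ for all i ∈ ι (with A_i viewed over F(ε)). Then there exist f ∈ F(ε) and an invertible N×N matrix Δ₀ with entries in F such that Δ = f · Δ₀ (with Δ₀ viewed over F(ε)) and Δ₀ is either symmetric (Δ₀ᵀ = Δ₀) or antisymmetric (Δ₀ᵀ = −Δ₀). -/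
/-!
Over `F`, the space `V` of matrices `M` with `A i * M = M * (A i)ᵀ` for all `i` is at most
one-dimensional, by Schur's lemma: the range of `M ∈ V` is invariant, so a nonzero `M` is
invertible, and for `M` invertible and `M' ∈ V` an eigenvalue `c` of `M' * M⁻¹` makes
`M' - c • M ∈ V` singular, hence zero.

The equation for `Δ` has coefficients in `F`, so every `F`-linear functional `φ` on `F(ε)`, applied
to the entries of `Δ`, gives an element of `V`. Some `φ₀` gives a nonzero, hence invertible, matrix
`Δ₀`; all other functionals give multiples of it. As functionals separate the points of
`F(ε)`, this forces `Δ = f • Δ₀`. Finally `V` is stable under transposition, so `Δ₀ᵀ = c • Δ₀`,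
and transposing twice gives `c ^ 2 = 1`.
-/

open Matrix

set_option synthInstance.maxHeartbeats 400000

section Schur

variable {F : Type*} [Field F] {N : ℕ} {ι : Type*} {A : ι → Matrix (Fin N) (Fin N) F}

/-- Schur's lemma for matrices intertwining `(A i)ᵀ` with `A i`: the range of `M` is invariant. -/
lemma eq_zero_or_isUnit_of_intertwines
    (hirr : ∀ W : Submodule F (Fin N → F),
      (∀ i, ∀ x ∈ W, (A i).mulVec x ∈ W) → W = ⊥ ∨ W = ⊤)
    {M : Matrix (Fin N) (Fin N) F} (hM : ∀ i, A i * M = M * (A i)ᵀ) :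
    M = 0 ∨ IsUnit M := by
  rcases hirr (LinearMap.range M.mulVecLin) (by
    rintro i _ ⟨y, rfl⟩
    refine ⟨(A i)ᵀ *ᵥ y, ?_⟩
    simp only [mulVecLin_apply, mulVec_mulVec, hM i]) with h | h
  · left
    rw [LinearMap.range_eq_bot] at h
    ext i j
    simpa using congrFun (LinearMap.congr_fun h (Pi.single j 1)) i
  · right
    rw [← Matrix.mulVec_surjective_iff_isUnit]
    exact LinearMap.range_eq_top.1 h

/-- Over an algebraically closed field the intertwiners form a space of dimension at most one. -/
lemma eq_smul_of_intertwines [IsAlgClosed F] (hN : 1 ≤ N)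
    (hirr : ∀ W : Submodule F (Fin N → F),
      (∀ i, ∀ x ∈ W, (A i).mulVec x ∈ W) → W = ⊥ ∨ W = ⊤)
    {M M' : Matrix (Fin N) (Fin N) F} (hM : ∀ i, A i * M = M * (A i)ᵀ)
    (hM' : ∀ i, A i * M' = M' * (A i)ᵀ) (hu : IsUnit M) :
    ∃ c : F, M' = c • M := by
  have : Nonempty (Fin N) := ⟨⟨0, hN⟩⟩
  have hdet : IsUnit M.det := (Matrix.isUnit_iff_isUnit_det M).1 hu
  obtain ⟨c, hc⟩ := Module.End.exists_eigenvalue (Matrix.toLin' (M' * M⁻¹))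
  obtain ⟨v, hv⟩ := hc.exists_hasEigenvector
  have hv1 : (M' * M⁻¹) *ᵥ v = c • v := by simpa using hv.apply_eq_smul
  have hMw : M *ᵥ (M⁻¹ *ᵥ v) = v := by
    rw [mulVec_mulVec, Matrix.mul_nonsing_inv _ hdet, one_mulVec]
  -- `M⁻¹ *ᵥ v` is a nonzero vector in the kernel of `M' - c • M`
  have hker : (M' - c • M) *ᵥ (M⁻¹ *ᵥ v) = 0 := by
    rw [sub_mulVec, smul_mulVec, hMw, mulVec_mulVec, hv1, sub_self]
  refine ⟨c, sub_eq_zero.1 ?_⟩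
  rcases eq_zero_or_isUnit_of_intertwines hirr (M := M' - c • M) (by
    intro i
    rw [mul_sub, sub_mul, hM' i, mul_smul_comm, smul_mul_assoc, hM i]) with h0 | h1
  · exact h0
  · exfalso
    have hw : M⁻¹ *ᵥ v = 0 :=
      Matrix.mulVec_injective_iff_isUnit.2 h1 (by simpa using hker)
    apply hv.2
    rw [← hMw, hw, mulVec_zero]

end Schur

/-- **matrix-level content of Theorem 3 of the paper.** Let `F` be an
algebraically closed field, `N ≥ 1`, and `(A i)` an irreducible family of `N × N`
matrices over `F`. If `Δ` is an invertible matrix over the rational function field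
`F(ε)` with `A i · Δ = Δ · (A i)ᵀ` for all `i` (matrices over `F` viewed over `F(ε)`),
then `Δ = f • Δ₀` for a rational function `f ∈ F(ε)` and a constant invertible matrix
`Δ₀` over `F` which is either symmetric or antisymmetric. -/
theorem self_dual_intersection_matrix
    {F : Type*} [Field F] [IsAlgClosed F] {N : ℕ} (hN : 1 ≤ N) {ι : Type*}
    (A : ι → Matrix (Fin N) (Fin N) F)
    (hirr : ∀ W : Submodule F (Fin N → F),
      (∀ i, ∀ x ∈ W, (A i).mulVec x ∈ W) → W = ⊥ ∨ W = ⊤)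
    (Δ : Matrix (Fin N) (Fin N) (RatFunc F)) (hΔ : IsUnit Δ)
    (h : ∀ i, (A i).map (algebraMap F (RatFunc F)) * Δ =
      Δ * ((A i).map (algebraMap F (RatFunc F)))ᵀ) :
    ∃ (f : RatFunc F) (Δ₀ : Matrix (Fin N) (Fin N) F),
      IsUnit Δ₀ ∧ Δ = f • Δ₀.map (algebraMap F (RatFunc F)) ∧
      (Δ₀ᵀ = Δ₀ ∨ Δ₀ᵀ = -Δ₀) := by
  have hφ : ∀ (φ : Module.Dual F (RatFunc F)) (i : ι),
      A i * Δ.map φ = Δ.map φ * (A i)ᵀ := by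
    intro φ i
    ext a b
    have hab := congrArg φ (congrFun (congrFun (h i) a) b)
    simp only [mul_apply, map_apply, transpose_apply, map_sum] at hab ⊢
    convert hab using 2 with k _ k _
    · rw [← Algebra.smul_def, map_smul, smul_eq_mul]
    · rw [mul_comm, mul_comm (Δ a k), ← Algebra.smul_def, map_smul, smul_eq_mul]
  have : Nonempty (Fin N) := ⟨⟨0, hN⟩⟩
  obtain ⟨a, b, hab⟩ : ∃ a b, Δ a b ≠ 0 := by
    by_contra! hc
    exact hΔ.ne_zero (Matrix.ext hc)
  obtain ⟨φ₀, hφ₀⟩ : ∃ φ : Module.Dual F (RatFunc F), φ (Δ a b) ≠ 0 := by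
    by_contra! hc
    exact hab ((Module.forall_dual_apply_eq_zero_iff F _).1 hc)
  have hu : IsUnit (Δ.map φ₀) :=
    (eq_zero_or_isUnit_of_intertwines hirr (hφ φ₀)).resolve_left
      fun h0 => hφ₀ (congrFun (congrFun h0 a) b)
  -- the factor `f` is read off from the entry `(a, b)`, where `φ₀` does not vanish
  refine ⟨(φ₀ (Δ a b))⁻¹ • Δ a b, Δ.map φ₀, hu, ?_, ?_⟩
  · ext p q
    rw [← sub_eq_zero, ← Module.forall_dual_apply_eq_zero_iff F]
    intro φ
    obtain ⟨c, hc⟩ := eq_smul_of_intertwines hN hirr (hφ φ₀) (hφ φ) hu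
    have h1 : φ (Δ a b) = c * φ₀ (Δ a b) := congrFun (congrFun hc a) b
    have h2 : φ (Δ p q) = c * φ₀ (Δ p q) := congrFun (congrFun hc p) q
    rw [Matrix.smul_apply, map_apply, map_apply, smul_eq_mul, mul_comm _ (algebraMap _ _ _),
      ← Algebra.smul_def, map_sub, map_smul, map_smul, h1, h2, smul_eq_mul, smul_eq_mul]
    field_simp
    ring
  · obtain ⟨c, hc⟩ := eq_smul_of_intertwines hN hirr (hφ φ₀) (M' := (Δ.map φ₀)ᵀ) (by
      intro i
      simpa [transpose_mul] using (congrArg transpose (hφ φ₀ i)).symm) hu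
    have h1 : φ₀ (Δ b a) = c * φ₀ (Δ a b) := congrFun (congrFun hc a) b
    have h2 : φ₀ (Δ a b) = c * φ₀ (Δ b a) := congrFun (congrFun hc b) a
    have hcc : c * c = 1 := by
      apply mul_right_cancel₀ hφ₀
      rw [one_mul, mul_assoc, ← h1, ← h2]
    rcases mul_self_eq_one_iff.1 hcc with rfl | rfl
    · left; rw [hc, one_smul]
    · right; rw [hc, neg_one_smul]
end

section
/- Let Δ₀ be the 4×4 rational matrix with rows (0, 0, 0, −1/8), (0, −3, 0, 0), (0, 0, −1, 0) and (−1/8, 0, 0, 0). A 4×4 matrix A over ℚ satisfies A · Δ₀ = Δ₀ · Aᵀ if and only if the following six relations hold (indices 1-based): A_{12} = (1/24)·A_{24}, A_{23} = 3·A_{32}, A_{13} = (1/8)·A_{34}, A_{31} = 8·A_{43}, A_{11} = A_{44}, and A_{21} = 24·A_{42}. -/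
open Matrix

/-- The constant intersection matrix `Δ₀` of the unequal-mass sunrise maximal cuts
(Example 2 of the paper). -/
noncomputable def sunriseDelta : Matrix (Fin 4) (Fin 4) ℚ :=
  !![0, 0, 0, -1/8;
     0, -3, 0, 0;
     0, 0, -1, 0;
     -1/8, 0, 0, 0]

/-- **Example 2 of the paper: the unequal-mass sunrise integral.** A
`4 × 4` rational matrix `A` satisfies `A · Δ₀ = Δ₀ · Aᵀ` (with `Δ₀` the sunrise
intersection matrix) if and only if the six linear relations
`A₁₂ = (1/24)·A₂₄`, `A₂₃ = 3·A₃₂`, `A₁₃ = (1/8)·A₃₄`, `A₃₁ = 8·A₄₃`, `A₁₁ = A₄₄`,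
`A₂₁ = 24·A₄₂` hold (written in 1-based indexing; below indices are 0-based). -/
theorem sunrise_selfduality_constraint (A : Matrix (Fin 4) (Fin 4) ℚ) :
    A * sunriseDelta = sunriseDelta * Aᵀ ↔
      (A 0 1 = (1/24) * A 1 3 ∧
       A 1 2 = 3 * A 2 1 ∧
       A 0 2 = (1/8) * A 2 3 ∧
       A 2 0 = 8 * A 3 2 ∧
       A 0 0 = A 3 3 ∧
       A 1 0 = 24 * A 3 1) := by
  constructor
  · intro h
    -- As `Δ₀` is symmetric, transposition swaps the two sides, so the entries strictly above
    -- the diagonal carry all the information.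
    have h01 := congrFun (congrFun h 0) 1
    have h02 := congrFun (congrFun h 0) 2
    have h03 := congrFun (congrFun h 0) 3
    have h12 := congrFun (congrFun h 1) 2
    have h13 := congrFun (congrFun h 1) 3
    have h23 := congrFun (congrFun h 2) 3
    simp [sunriseDelta, Matrix.mul_apply, Fin.sum_univ_four] at h01 h02 h03 h12 h13 h23
    refine ⟨?_, ?_, ?_, ?_, ?_, ?_⟩ <;> linarith
  · rintro ⟨h1, h2, h3, h4, h5, h6⟩
    ext i j
    fin_cases i <;> fin_cases j <;>
      simp [sunriseDelta, Matrix.mul_apply, Fin.sum_univ_four] <;> linarith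
end
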